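/- arXiv:math/0403278 — 2 statements merged into one kernel-verified Lean document; each statement's English description precedes it below -/
import Mathlib

section
/- Let K be a convex body in ℝ^n. Then there exists a nonempty subset I ⊆ {1,...,n} such that the orthogonal projection P_I K of K onto ℝ^I contains at least vol(K)/4^n − 2^{-n} integer cells of the lattice P_I ℤ^n. In particular, if vol(K/6) ≥ 1 then P_I K contains at least vol(K)/6^n integer cells. -/
open MeasureTheory

/-- The coordinate projection of `K ⊆ ℝ^n` onto the coordinates in `I`. -/
def projSet {n : ℕ} (K : Set (Fin n → ℝ)) (I : Finset (Fin n)) :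
    Set ({i // i ∈ I} → ℝ) :=
  {z | ∃ x ∈ K, ∀ i : {i // i ∈ I}, x i.1 = z i}

/-- The number of integer cells `a + [0,1]^I` of the lattice `ℤ^I` contained
in a set `S ⊆ ℝ^I`. -/
noncomputable def cellCount {n : ℕ} (I : Finset (Fin n))
    (S : Set ({i // i ∈ I} → ℝ)) : ℕ :=
  Set.ncard {a : {i // i ∈ I} → ℤ |
    {y : {i // i ∈ I} → ℝ | ∀ i, (a i : ℝ) ≤ y i ∧ y i ≤ a i + 1} ⊆ S}

/-!
Record a finite set `P` of points of `ℝⁿ` by its family of strict subgraphs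
`{(i, t) | t < p i}`, with `t` running over the coordinates of points of `P`. By Pajor's form of
the Sauer-Shelah lemma this family shatters at least `#P` sets `T` of thresholds. Subgraphs are
closed downwards, so a shattered `T` has at most one threshold per coordinate, and shattering says
that `P` has points on all prescribed sides of these thresholds. If the coordinates of `P` lie in
cosets of `2ℤ`, a coordinate above a threshold exceeds it by at least `2`. Rounding the thresholds
up therefore turns `T` into a corner of an integer cell such that `P` has points on all prescribed
sides of that cell: the cell lies in the coordinate convex hull of a projection of `P`.

Averaging over translates of `(2ℤ)ⁿ` gives such a `P ⊆ K` with `#P ≥ vol(K) / 2ⁿ`. One of the `2ⁿ`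
coordinate subspaces then receives enough cells, the empty set of coordinates accounting for at
most one. For convex `K` the coordinate convex hull of a projection is the projection itself.
-/

open Finset

section CoordConvexHull

variable {ι α : Type*}

/-- The coordinate convex hull of `S`: the points `y` all of whose closed coordinate octants
meet `S`. The octants at `y` are indexed by the set `J` of coordinates in which they extend
downwards. -/
def coordConvexHull [Preorder α] (S : Set (ι → α)) : Set (ι → α) :=
  {y | ∀ J : Set ι, ∃ x ∈ S, ∀ i, (i ∈ J → x i ≤ y i) ∧ (i ∉ J → y i ≤ x i)}

theorem subset_coordConvexHull [Preorder α] (S : Set (ι → α)) : S ⊆ coordConvexHull S :=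
  fun x hx _ => ⟨x, hx, fun _ => ⟨fun _ => le_rfl, fun _ => le_rfl⟩⟩

theorem bddBelow_coordConvexHull [Preorder α] {S : Set (ι → α)} (hS : BddBelow S) :
    BddBelow (coordConvexHull S) := by
  obtain ⟨l, hl⟩ := hS
  refine ⟨l, fun y hy => ?_⟩
  obtain ⟨x, hx, hxy⟩ := hy Set.univ
  exact (hl hx).trans fun i => (hxy i).1 (Set.mem_univ i)

theorem bddAbove_coordConvexHull [Preorder α] {S : Set (ι → α)} (hS : BddAbove S) :
    BddAbove (coordConvexHull S) := by
  obtain ⟨u, hu⟩ := hS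
  refine ⟨u, fun y hy => ?_⟩
  obtain ⟨x, hx, hxy⟩ := hy ∅
  exact le_trans (fun i => (hxy i).2 (Set.notMem_empty i)) (hu hx)

section Convex

variable [Field α] [LinearOrder α] [IsStrictOrderedRing α] {S : Set (ι → α)}

theorem exists_mem_apply_eq_of_convex (hS : Convex α S) {x x' : ι → α} (hx : x ∈ S)
    (hx' : x' ∈ S) {i : ι} {t : α} (hxt : x i ≤ t) (htx' : t ≤ x' i) : ∃ z ∈ S, z i = t :=
  (convex_iff_ordConnected.1 (hS.linear_image (LinearMap.proj (R := α) i))).out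
    ⟨x, hx, rfl⟩ ⟨x', hx', rfl⟩ ⟨hxt, htx'⟩

theorem convex_setOf_octant (s : Finset ι) (J : Set ι) (y : ι → α) :
    Convex α {x : ι → α | ∀ i ∈ s, (i ∈ J → x i ≤ y i) ∧ (i ∉ J → y i ≤ x i)} := by
  have hproj (i : ι) : IsLinearMap α fun x : ι → α => x i := ⟨fun _ _ => rfl, fun _ _ => rfl⟩
  simp only [Set.ofPred_forall, Set.ofPred_and]
  exact convex_iInter₂ fun i _ =>
    (convex_iInter fun _ => convex_halfSpace_le (hproj i) (y i)).inter
      (convex_iInter fun _ => convex_halfSpace_ge (hproj i) (y i))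

theorem mem_of_forall_octant (s : Finset ι) (hS : Convex α S) {y : ι → α}
    (heq : ∀ x ∈ S, ∀ i ∉ s, x i = y i)
    (hoct : ∀ J : Set ι, ∃ x ∈ S, ∀ i ∈ s, (i ∈ J → x i ≤ y i) ∧ (i ∉ J → y i ≤ x i)) :
    y ∈ S := by
  classical
  induction s using Finset.induction_on generalizing S with
  | empty =>
    obtain ⟨x, hx, -⟩ := hoct ∅
    rwa [← funext fun i => heq x hx i (notMem_empty i)]
  | insert i s his ih =>
    suffices y ∈ S ∩ {x | x i = y i} from this.1
    refine ih (hS.inter (convex_hyperplane ⟨fun _ _ => rfl, fun _ _ => rfl⟩ (y i))) ?_ fun J => ?_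
    · rintro x ⟨hx, hxi⟩ j hj
      by_cases hji : j = i
      · rwa [hji]
      · exact heq x hx j (by simp [hji, hj])
    · obtain ⟨x, hx, hxJ⟩ := hoct (insert i J)
      obtain ⟨x', hx', hxJ'⟩ := hoct (J \ {i})
      have ne_of_mem {j : ι} (hj : j ∈ s) : j ≠ i := fun h => his (h ▸ hj)
      obtain ⟨z, ⟨hz, hzJ⟩, hzi⟩ :=
        exists_mem_apply_eq_of_convex (hS.inter (convex_setOf_octant s J y))
          ⟨hx, fun j hj => by simpa [ne_of_mem hj] using hxJ j (mem_insert_of_mem hj)⟩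
          ⟨hx', fun j hj => by simpa [ne_of_mem hj] using hxJ' j (mem_insert_of_mem hj)⟩
          ((hxJ i (mem_insert_self i s)).1 (Set.mem_insert i J))
          ((hxJ' i (mem_insert_self i s)).2 fun h => h.2 rfl)
      exact ⟨z, ⟨hz, hzi⟩, hzJ⟩

theorem coordConvexHull_eq_self [Finite ι] (hS : Convex α S) : coordConvexHull S = S := by
  cases nonempty_fintype ι
  refine (subset_coordConvexHull S).antisymm' fun y hy => ?_
  refine mem_of_forall_octant univ hS (fun _ _ i hi => absurd (mem_univ i) hi) fun J => ?_
  obtain ⟨x, hx, hxJ⟩ := hy J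
  exact ⟨x, hx, fun i _ => hxJ i⟩

end Convex

end CoordConvexHull

section Subgraph

variable {ι α : Type*} [Fintype ι] [DecidableEq ι] [LinearOrder α]

/-- The union of the graphs of the functions in `P`. Its elements `(i, t)` serve as thresholds: the
`i`-th coordinate of a point is compared with `t`. -/
def graphUnion (P : Finset (ι → α)) : Finset (ι × α) :=
  (univ ×ˢ P).image fun q => (q.1, q.2 q.1)

theorem mem_graphUnion {P : Finset (ι → α)} {i : ι} {t : α} :
    (i, t) ∈ graphUnion P ↔ ∃ p ∈ P, p i = t := by
  simp [graphUnion]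

/-- The thresholds strictly below the graph of `p`. Thresholds run over `graphUnion P` only, which
makes this a finite set and still separates the functions in `P`. -/
def subgraph (P : Finset (ι → α)) (p : ι → α) : Finset (ι × α) :=
  {q ∈ graphUnion P | q.2 < p q.1}

theorem subgraph_injOn (P : Finset (ι → α)) : Set.InjOn (subgraph P) P := by
  intro p hp p' hp' h
  have le_of {p q : ι → α} (hp : p ∈ P) (h : subgraph P p = subgraph P q) : ∀ i, q i ≤ p i := by
    intro i
    by_contra! hlt
    have : (i, p i) ∈ subgraph P p := by
      rw [h]
      exact mem_filter.2 ⟨mem_graphUnion.2 ⟨p, hp, rfl⟩, hlt⟩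
    exact lt_irrefl _ (mem_filter.1 this).2
  exact funext fun i => (le_of hp' h.symm i).antisymm (le_of hp h i)

theorem card_le_card_shatterer_subgraph (P : Finset (ι → α)) :
    #P ≤ #(P.image (subgraph P)).shatterer :=
  (card_image_of_injOn (subgraph_injOn P)).ge.trans (card_le_card_shatterer _)

variable {P : Finset (ι → α)} {T : Finset (ι × α)}

theorem subset_graphUnion_of_shatters (hT : (P.image (subgraph P)).Shatters T) :
    T ⊆ graphUnion P := by
  obtain ⟨u, hu, hTu⟩ := hT.exists_superset
  obtain ⟨p, -, rfl⟩ := mem_image.1 hu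
  exact hTu.trans (filter_subset _ _)

theorem exists_lt_iff_of_shatters (hT : (P.image (subgraph P)).Shatters T) (J : Set (ι × α)) :
    ∃ p ∈ P, ∀ q ∈ T, q.2 < p q.1 ↔ q ∈ J := by
  classical
  obtain ⟨u, hu, hTu⟩ := hT (filter_subset (· ∈ J) T)
  obtain ⟨p, hp, rfl⟩ := mem_image.1 hu
  refine ⟨p, hp, fun q hq => ?_⟩
  have := congrArg (q ∈ ·) hTu
  simpa [subgraph, hq, subset_graphUnion_of_shatters hT hq] using this

theorem injOn_fst_of_shatters (hT : (P.image (subgraph P)).Shatters T) :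
    Set.InjOn Prod.fst (T : Set (ι × α)) := by
  have threshold_not_lt {i : ι} {s t : α} (hs : (i, s) ∈ T) (ht : (i, t) ∈ T) : ¬ s < t := by
    intro hst
    obtain ⟨p, -, hp⟩ := exists_lt_iff_of_shatters hT {(i, t)}
    have htp : t < p i := (hp _ ht).2 rfl
    have hsp : (i, s) = (i, t) := (hp _ hs).1 (hst.trans htp)
    exact hst.ne (congrArg Prod.snd hsp)
  rintro ⟨i, s⟩ hs ⟨_, t⟩ ht rfl
  exact Prod.ext rfl ((not_lt.1 (threshold_not_lt ht hs)).antisymm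
    (not_lt.1 (threshold_not_lt hs ht)))

end Subgraph

section Separated

variable {ι : Type*}

/-- Any two distinct `i`-th coordinates of points of `P` differ by at least `r`. -/
def CoordSeparated (r : ℝ) (P : Set (ι → ℝ)) : Prop :=
  ∀ p ∈ P, ∀ q ∈ P, ∀ i, p i < q i → p i + r ≤ q i

theorem CoordSeparated.anti {r r' : ℝ} {P : Set (ι → ℝ)} (hP : CoordSeparated r P)
    (hr : r' ≤ r) : CoordSeparated r' P :=
  fun p hp q hq i hlt => (add_le_add_right hr (p i)).trans (hP p hp q hq i hlt)

theorem coordSeparated_of_forall_sub_eq_mul {r : ℝ} (hr : 0 < r) {P : Set (ι → ℝ)}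
    (hP : ∀ p ∈ P, ∀ q ∈ P, ∀ i, ∃ k : ℤ, q i - p i = r * k) : CoordSeparated r P := by
  intro p hp q hq i hlt
  obtain ⟨k, hk⟩ := hP p hp q hq i
  have hk_pos : 0 < r * k := hk ▸ sub_pos.2 hlt
  have one_le : (1 : ℝ) ≤ k := by exact_mod_cast pos_of_mul_pos_right hk_pos hr.le
  linarith [le_mul_of_one_le_right hr.le one_le]

theorem CoordSeparated.apply_eq_of_ceil_eq {P : Set (ι → ℝ)} (hP : CoordSeparated 1 P)
    {p q : ι → ℝ} (hp : p ∈ P) (hq : q ∈ P) {i : ι} (h : ⌈p i⌉ = ⌈q i⌉) : p i = q i := by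
  have ceil_lt {p q : ι → ℝ} (hp : p ∈ P) (hq : q ∈ P) (hlt : p i < q i) : ⌈p i⌉ < ⌈q i⌉ := by
    rw [Int.lt_ceil]
    linarith [hP p hp q hq i hlt, Int.ceil_lt_add_one (p i)]
  rcases lt_trichotomy (p i) (q i) with hlt | heq | hgt
  · exact absurd h (ceil_lt hp hq hlt).ne
  · exact heq
  · exact absurd h (ceil_lt hq hp hgt).ne'

end Separated

section IntegerCell

variable {ι : Type*}

/-- The integer cell `a + [0,1]^ι`. -/
def integerCell (a : ι → ℤ) : Set (ι → ℝ) :=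
  {y | ∀ i, (a i : ℝ) ≤ y i ∧ y i ≤ a i + 1}

theorem cellCount_eq_ncard {n : ℕ} (I : Finset (Fin n)) (S : Set ({i // i ∈ I} → ℝ)) :
    cellCount I S = {a | integerCell a ⊆ S}.ncard :=
  rfl

theorem intCast_mem_integerCell (a : ι → ℤ) : (fun i => (a i : ℝ)) ∈ integerCell a :=
  fun i => ⟨le_rfl, (lt_add_one (a i : ℝ)).le⟩

theorem finite_setOf_integerCell_subset [Finite ι] {S : Set (ι → ℝ)}
    (hbelow : BddBelow S) (habove : BddAbove S) : {a | integerCell a ⊆ S}.Finite := by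
  classical
  cases nonempty_fintype ι
  obtain ⟨l, hl⟩ := hbelow
  obtain ⟨u, hu⟩ := habove
  refine (Set.finite_Icc (fun i => ⌈l i⌉) (fun i => ⌊u i⌋)).subset fun a ha => ?_
  have haS := ha (intCast_mem_integerCell a)
  exact ⟨fun i => Int.ceil_le.2 (hl haS i), fun i => Int.le_floor.2 (hu haS i)⟩

/-- `a` is obtained by rounding up, for each `i ∈ I`, some threshold `t` with `(i, t) ∈ T`. -/
def IsRoundingUp {I : Finset ι} (T : Finset (ι × ℝ)) (a : {i // i ∈ I} → ℤ) : Prop :=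
  ∀ i, ∃ t, (i.1, t) ∈ T ∧ ⌈t⌉ = a i

theorem exists_isRoundingUp [DecidableEq ι] (T : Finset (ι × ℝ)) :
    ∃ a : {i // i ∈ T.image Prod.fst} → ℤ, IsRoundingUp T a := by
  have (i : {i // i ∈ T.image Prod.fst}) : ∃ k : ℤ, ∃ t, (i.1, t) ∈ T ∧ ⌈t⌉ = k := by
    obtain ⟨q, hq, hqi⟩ := mem_image.1 i.2
    exact ⟨⌈q.2⌉, q.2, hqi ▸ hq, rfl⟩
  choose a ha using this
  exact ⟨a, ha⟩

theorem subset_of_isRoundingUp [Fintype ι] [DecidableEq ι] {P : Finset (ι → ℝ)}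
    {T T' : Finset (ι × ℝ)} {I : Finset ι} {a : {i // i ∈ I} → ℤ}
    (hP : CoordSeparated 1 (P : Set (ι → ℝ))) (hT : (P.image (subgraph P)).Shatters T)
    (hT' : (P.image (subgraph P)).Shatters T') (hTI : T.image Prod.fst = I)
    (ha : IsRoundingUp T a) (ha' : IsRoundingUp T' a) : T ⊆ T' := by
  rintro ⟨i, t⟩ ht
  have hi : i ∈ I := hTI ▸ mem_image_of_mem Prod.fst ht
  obtain ⟨s, hs, hsa⟩ := ha ⟨i, hi⟩
  obtain ⟨s', hs', hsa'⟩ := ha' ⟨i, hi⟩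
  obtain rfl : s = t := congrArg Prod.snd (injOn_fst_of_shatters hT hs ht rfl)
  obtain ⟨p, hp, rfl⟩ := mem_graphUnion.1 (subset_graphUnion_of_shatters hT hs)
  obtain ⟨q, hq, rfl⟩ := mem_graphUnion.1 (subset_graphUnion_of_shatters hT' hs')
  rwa [hP.apply_eq_of_ceil_eq hp hq (hsa.trans hsa'.symm)]

end IntegerCell

section CellCount

variable {n : ℕ} {K : Set (Fin n → ℝ)}

theorem projSet_eq_image (K : Set (Fin n → ℝ)) (I : Finset (Fin n)) :
    projSet K I = I.restrict '' K := by
  ext z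
  simp [projSet, funext_iff]

theorem convex_projSet (hK : Convex ℝ K) (I : Finset (Fin n)) : Convex ℝ (projSet K I) := by
  rw [projSet_eq_image]
  exact hK.is_linear_image ⟨fun _ _ => rfl, fun _ _ => rfl⟩

theorem restrict_mem_projSet {x : Fin n → ℝ} (hx : x ∈ K) (I : Finset (Fin n)) :
    I.restrict x ∈ projSet K I :=
  ⟨x, hx, fun _ => rfl⟩

theorem finite_setOf_integerCell_subset_coordConvexHull (hK : Bornology.IsBounded K)
    (I : Finset (Fin n)) : {a | integerCell a ⊆ coordConvexHull (projSet K I)}.Finite := by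
  have hmono : Monotone (I.restrict : (Fin n → ℝ) → _) := fun _ _ h i => h i
  rw [projSet_eq_image]
  exact finite_setOf_integerCell_subset
    (bddBelow_coordConvexHull (hmono.map_bddBelow hK.bddBelow))
    (bddAbove_coordConvexHull (hmono.map_bddAbove hK.bddAbove))

theorem cellCount_empty_le_one (S : Set ({i // i ∈ (∅ : Finset (Fin n))} → ℝ)) :
    cellCount ∅ S ≤ 1 :=
  Set.ncard_le_one_of_subsingleton _

variable {P : Finset (Fin n → ℝ)}

theorem integerCell_subset_coordConvexHull {T : Finset (Fin n × ℝ)} {I : Finset (Fin n)}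
    {a : {i // i ∈ I} → ℤ} (hPK : (P : Set (Fin n → ℝ)) ⊆ K)
    (hP : CoordSeparated 2 (P : Set (Fin n → ℝ))) (hT : (P.image (subgraph P)).Shatters T)
    (ha : IsRoundingUp T a) : integerCell a ⊆ coordConvexHull (projSet K I) := by
  intro y hy J
  obtain ⟨p, hp, hpJ⟩ := exists_lt_iff_of_shatters hT {q | ∀ h : q.1 ∈ I, ⟨q.1, h⟩ ∉ J}
  refine ⟨I.restrict p, restrict_mem_projSet (hPK hp) I, fun i => ?_⟩
  obtain ⟨t, ht, hta⟩ := ha i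
  have lt_iff : t < p i ↔ i ∉ J := (hpJ _ ht).trans ⟨fun h => h i.2, fun h _ => h⟩
  constructor
  · intro hi
    calc p i ≤ t := not_lt.1 fun h => lt_iff.1 h hi
      _ ≤ ⌈t⌉ := Int.le_ceil t
      _ ≤ y i := hta ▸ (hy i).1
  · intro hi
    obtain ⟨q, hq, rfl⟩ := mem_graphUnion.1 (subset_graphUnion_of_shatters hT ht)
    calc y i ≤ ⌈q i⌉ + 1 := hta ▸ (hy i).2
      _ ≤ q i + 2 := by linarith [Int.ceil_lt_add_one (q i)]
      _ ≤ p i := hP q hq p hp i (lt_iff.2 hi)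

theorem card_filter_shatterer_le_cellCount (hK : Bornology.IsBounded K)
    (hPK : (P : Set (Fin n → ℝ)) ⊆ K) (hP : CoordSeparated 2 (P : Set (Fin n → ℝ)))
    (I : Finset (Fin n)) :
    #{T ∈ (P.image (subgraph P)).shatterer | T.image Prod.fst = I} ≤
      cellCount I (coordConvexHull (projSet K I)) := by
  have hfin := finite_setOf_integerCell_subset_coordConvexHull hK I
  rw [cellCount_eq_ncard, Set.ncard_eq_toFinset_card _ hfin]
  refine card_le_card_of_forall_subsingleton IsRoundingUp (fun T hT => ?_) fun a _ T hT T' hT' => ?_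
  · obtain ⟨hTs, rfl⟩ := mem_filter.1 hT
    obtain ⟨a, ha⟩ := exists_isRoundingUp T
    exact ⟨a, hfin.mem_toFinset.2
      (integerCell_subset_coordConvexHull hPK hP (mem_shatterer.1 hTs) ha), ha⟩
  · obtain ⟨⟨hTs, hTI⟩, hTa⟩ := And.imp_left mem_filter.1 hT
    obtain ⟨⟨hTs', hTI'⟩, hTa'⟩ := And.imp_left mem_filter.1 hT'
    rw [mem_shatterer] at hTs hTs'
    have hP_one := hP.anti one_le_two
    exact (subset_of_isRoundingUp hP_one hTs hTs' hTI hTa hTa').antisymm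
      (subset_of_isRoundingUp hP_one hTs' hTs hTI' hTa' hTa)

theorem card_le_sum_cellCount (hK : Bornology.IsBounded K) (hPK : (P : Set (Fin n → ℝ)) ⊆ K)
    (hP : CoordSeparated 2 (P : Set (Fin n → ℝ))) :
    #P ≤ ∑ I, cellCount I (coordConvexHull (projSet K I)) :=
  calc #P ≤ #(P.image (subgraph P)).shatterer := card_le_card_shatterer_subgraph P
    _ = ∑ I, #{T ∈ (P.image (subgraph P)).shatterer | T.image Prod.fst = I} :=
      card_eq_sum_card_fiberwise fun _ _ => mem_coe.2 (mem_univ _)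
    _ ≤ ∑ I, cellCount I (coordConvexHull (projSet K I)) :=
      sum_le_sum fun I _ => card_filter_shatterer_le_cellCount hK hPK hP I

end CellCount

section Measure

theorem measure_le_mul_of_forall_card_le {G α : Type*} [AddGroup G] [Countable G] [AddAction G α]
    [MeasurableSpace α] [MeasurableConstVAdd G α] {μ : Measure α} [VAddInvariantMeasure G α μ]
    {F S : Set α} (hF : IsAddFundamentalDomain G F μ) (hS : NullMeasurableSet S μ) {m : ℕ}
    (hm : ∀ x, ∀ t : Finset G, (∀ g ∈ t, g +ᵥ x ∈ S) → #t ≤ m) : μ S ≤ m * μ F := by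
  classical
  calc μ S = ∫⁻ x, S.indicator 1 x ∂μ := (lintegral_indicator_one₀ hS).symm
    _ = ∑' g : G, ∫⁻ x in F, S.indicator 1 (g +ᵥ x) ∂μ := hF.lintegral_eq_tsum'' _
    _ = ∫⁻ x in F, ∑' g : G, S.indicator 1 (g +ᵥ x) ∂μ := .symm <| lintegral_tsum fun g =>
        ((aemeasurable_const.indicator₀ hS).comp_quasiMeasurePreserving
          (measurePreserving_vadd g μ).quasiMeasurePreserving).restrict
    _ ≤ ∫⁻ _ in F, m ∂μ := lintegral_mono fun x => by
        rw [ENNReal.tsum_eq_iSup_sum]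
        refine iSup_le fun t => ?_
        have := hm x {g ∈ t | g +ᵥ x ∈ S} (fun g hg => (mem_filter.1 hg).2)
        simpa [Set.indicator_apply] using this
    _ = m * μ F := setLIntegral_const _ _

theorem measure_le_mul_measure_fundamentalDomain {ι E : Type*} [Finite ι] [NormedAddCommGroup E]
    [NormedSpace ℝ E] [MeasurableSpace E] [BorelSpace E] {μ : Measure E} [μ.IsAddLeftInvariant]
    (b : Module.Basis ι ℝ E) {S : Set E} (hS : NullMeasurableSet S μ) {m : ℕ}
    (hm : ∀ P : Finset E, (P : Set E) ⊆ S →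
      (∀ p ∈ P, ∀ q ∈ P, q - p ∈ Submodule.span ℤ (Set.range b)) → #P ≤ m) :
    μ S ≤ m * μ (ZSpan.fundamentalDomain b) := by
  classical
  let L : AddSubgroup E := (Submodule.span ℤ (Set.range b)).toAddSubgroup
  have : Countable L := inferInstanceAs (Countable (Submodule.span ℤ (Set.range b)))
  refine measure_le_mul_of_forall_card_le (G := L) (ZSpan.isAddFundamentalDomain' b μ) hS
    fun x t ht => ?_
  have hinj : Function.Injective fun g : L => g +ᵥ x :=
    fun g h hgh => Subtype.ext (add_right_cancel hgh)
  rw [← card_image_of_injective t hinj]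
  refine hm _ ((coe_image ..).trans_subset (Set.image_subset_iff.2 ht)) ?_
  simp only [forall_mem_image]
  intro g _ h _
  exact (add_sub_add_right_eq_sub (h : E) g x).symm ▸ (h - g).2

theorem exists_apply_eq_mul_of_mem_span {ι : Type*} [Finite ι] {r : ℝ} (hr : IsUnit r) {v : ι → ℝ}
    (hv : v ∈ Submodule.span ℤ (Set.range ((Pi.basisFun ℝ ι).isUnitSMul fun _ => hr))) (i : ι) :
    ∃ k : ℤ, v i = r * k := by
  obtain ⟨k, hk⟩ := (Module.Basis.mem_span_iff_repr_mem ℤ _ _).1 hv i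
  refine ⟨k, ?_⟩
  rw [Module.Basis.repr_isUnitSMul, Pi.basisFun_repr, Units.smul_def, smul_eq_mul,
    eq_intCast] at hk
  rw [hk, ← mul_assoc, hr.mul_val_inv, one_mul]

variable {ι : Type*} [Fintype ι]

theorem volume_fundamentalDomain_isUnitSMul_basisFun {r : ℝ} (hr : IsUnit r) :
    volume (ZSpan.fundamentalDomain ((Pi.basisFun ℝ ι).isUnitSMul fun _ => hr)) =
      ENNReal.ofReal |r| ^ Fintype.card ι := by
  classical
  rw [ZSpan.measure_fundamentalDomain _ _ (Pi.basisFun ℝ ι), ZSpan.fundamentalDomain_pi_basisFun,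
    Module.Basis.det_isUnitSMul, prod_const, card_univ, abs_pow, ENNReal.ofReal_pow (abs_nonneg r),
    volume_pi, Measure.pi_pi]
  simp only [Real.volume_Ico, sub_zero, ENNReal.ofReal_one, prod_const_one, mul_one]

theorem volume_le_mul_of_forall_coordSeparated_card_le {r : ℝ} (hr : 0 < r) {S : Set (ι → ℝ)}
    (hS : NullMeasurableSet S) {m : ℕ} (hm : ∀ P : Finset (ι → ℝ), (P : Set (ι → ℝ)) ⊆ S →
      CoordSeparated r (P : Set (ι → ℝ)) → #P ≤ m) :
    volume S ≤ m * ENNReal.ofReal r ^ Fintype.card ι := by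
  have hu : IsUnit r := hr.ne'.isUnit
  rw [← abs_of_pos hr, ← volume_fundamentalDomain_isUnitSMul_basisFun hu]
  exact measure_le_mul_measure_fundamentalDomain _ hS fun P hPS hP => hm P hPS <|
    coordSeparated_of_forall_sub_eq_mul hr fun p hp q hq i =>
      exists_apply_eq_mul_of_mem_span hu (hP p hp q hq) i

end Measure

theorem exists_nonempty_sum_le {ι : Type*} [Fintype ι] [Nonempty ι] (f : Finset ι → ℕ) :
    ∃ I : Finset ι, I.Nonempty ∧ ∑ J, f J ≤ f ∅ + 2 ^ Fintype.card ι * f I := by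
  classical
  obtain ⟨I, hI, hmax⟩ := (univ.erase (∅ : Finset ι)).exists_max_image f
    ⟨univ, by simp [univ_nonempty.ne_empty]⟩
  refine ⟨I, nonempty_iff_ne_empty.2 (ne_of_mem_erase hI), ?_⟩
  rw [← add_sum_erase _ _ (mem_univ ∅)]
  gcongr
  calc ∑ J ∈ univ.erase ∅, f J ≤ #(univ.erase (∅ : Finset ι)) * f I := sum_le_card_nsmul _ _ _ hmax
    _ ≤ 2 ^ Fintype.card ι * f I := by
      gcongr
      exact (card_le_univ _).trans_eq Fintype.card_finset

theorem volume_toReal_le_two_pow_mul_sum_cellCount {n : ℕ} {K : Set (Fin n → ℝ)}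
    (hK : Bornology.IsBounded K) (hmeas : NullMeasurableSet K) :
    (volume K).toReal ≤ 2 ^ n * (∑ I, cellCount I (coordConvexHull (projSet K I)) : ℕ) := by
  have hvol := volume_le_mul_of_forall_coordSeparated_card_le two_pos hmeas fun P hPK hP =>
    card_le_sum_cellCount hK hPK hP
  have htoReal := ENNReal.toReal_mono (by finiteness) hvol
  rwa [ENNReal.toReal_mul, ENNReal.toReal_natCast, ENNReal.toReal_pow,
    ENNReal.toReal_ofReal two_pos.le, Fintype.card_fin, mul_comm] at htoReal

theorem div_six_pow_le_div_four_pow_sub {V : ℝ} {n : ℕ} (hn : 0 < n) (hV : 1 ≤ V / 6 ^ n) :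
    V / 6 ^ n ≤ V / 4 ^ n - 2 ^ (-(n : ℤ)) := by
  have h32 : (3 / 2 : ℝ) ≤ (3 / 2) ^ n := le_self_pow₀ (by norm_num) hn.ne'
  have h12 : (2 : ℝ) ^ (-(n : ℤ)) ≤ 1 / 2 := by
    rw [zpow_neg, zpow_natCast, one_div]
    exact inv_anti₀ two_pos (le_self_pow₀ one_le_two hn.ne')
  have hsplit : V / 4 ^ n = V / 6 ^ n * (3 / 2) ^ n := by
    rw [div_mul_eq_mul_div, mul_div_assoc, ← div_pow, div_eq_mul_inv, ← inv_pow]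
    norm_num
  rw [hsplit]
  calc V / 6 ^ n ≤ V / 6 ^ n * (3 / 2) - 1 / 2 := by linarith
    _ ≤ V / 6 ^ n * (3 / 2) ^ n - 2 ^ (-(n : ℤ)) := by gcongr

theorem exists_projection_with_many_cells_general (n : ℕ) (hn : 0 < n) (K : Set (Fin n → ℝ))
    (hK : Bornology.IsBounded K) (hmeas : NullMeasurableSet K) :
    ∃ I : Finset (Fin n), I.Nonempty ∧
      (volume K).toReal / 4 ^ n - 2 ^ (-(n : ℤ)) ≤
        (cellCount I (coordConvexHull (projSet K I)) : ℝ) ∧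
      (1 ≤ (volume K).toReal / 6 ^ n →
        (volume K).toReal / 6 ^ n ≤ (cellCount I (coordConvexHull (projSet K I)) : ℝ)) := by
  have : Nonempty (Fin n) := ⟨⟨0, hn⟩⟩
  obtain ⟨I, hI, hsum⟩ := exists_nonempty_sum_le fun J =>
    cellCount J (coordConvexHull (projSet K J))
  suffices hmain : (volume K).toReal / 4 ^ n - 2 ^ (-(n : ℤ)) ≤
      (cellCount I (coordConvexHull (projSet K I)) : ℝ) from
    ⟨I, hI, hmain, fun h => (div_six_pow_le_div_four_pow_sub hn h).trans hmain⟩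
  have hcount : ∑ J, cellCount J (coordConvexHull (projSet K J)) ≤
      1 + 2 ^ n * cellCount I (coordConvexHull (projSet K I)) := by
    rw [Fintype.card_fin] at hsum
    exact hsum.trans (Nat.add_le_add_right (cellCount_empty_le_one _) _)
  have hvol : (volume K).toReal ≤
      2 ^ n * (1 + 2 ^ n * cellCount I (coordConvexHull (projSet K I))) :=
    (volume_toReal_le_two_pow_mul_sum_cellCount hK hmeas).trans (by gcongr; exact_mod_cast hcount)
  have h4 : (4 : ℝ) ^ n = 2 ^ n * 2 ^ n := by rw [← mul_pow]; norm_num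
  rw [sub_le_iff_le_add, div_le_iff₀ (by positivity), h4, zpow_neg, zpow_natCast]
  refine hvol.trans_eq ?_
  field_simp
  ring

/-- **Theorem 2.10 / Theorem 1.1.** A convex body `K ⊆ ℝ^n` has a coordinate
projection containing at least `vol(K)/4^n − 2^{−n}` integer cells; in
particular at least `vol(K/6) = vol(K)/6^n` cells when this is at least `1`. -/
theorem exists_projection_with_many_cells (n : ℕ) (hn : 0 < n)
    (K : Set (Fin n → ℝ)) (hconv : Convex ℝ K) (hcomp : IsCompact K)
    (hint : (interior K).Nonempty) :
    ∃ I : Finset (Fin n), I.Nonempty ∧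
      (volume K).toReal / 4 ^ n - 2 ^ (-(n : ℤ)) ≤ (cellCount I (projSet K I) : ℝ) ∧
      (1 ≤ (volume K).toReal / 6 ^ n →
        (volume K).toReal / 6 ^ n ≤ (cellCount I (projSet K I) : ℝ)) := by
  simpa only [coordConvexHull_eq_self (convex_projSet hconv _)] using
    exists_projection_with_many_cells_general n hn K hcomp.isBounded
      hcomp.measurableSet.nullMeasurableSet
end

section
/- Let K ⊆ B_p^n be a measurable set, 1 ≤ p ≤ ∞, and 0 < k ≤ n an integer. Then the combinatorial dimension satisfies v(K, t) ≥ n − k for t = c(k/n)·(vol(K)/vol(B_p^n))^{1/k}, where c > 0 is an absolute constant. -/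
open MeasureTheory

/-- The normalized `L_p^n` ball `B_p^n = {x : ∑ |x i|^p ≤ n}` (finite `p`). -/
def lpBall (p : ℝ) (n : ℕ) : Set (Fin n → ℝ) :=
  {x | ∑ i, |x i| ^ p ≤ (n : ℝ)}

/-- The `L_∞^n` ball `B_∞^n = [-1,1]^n`. -/
def cubeBall (n : ℕ) : Set (Fin n → ℝ) := {x | ∀ i, |x i| ≤ 1}

/-- `I` is `t`-shattered by `K ⊆ ℝ^n`. -/
def TShattered {n : ℕ} (K : Set (Fin n → ℝ)) (I : Finset (Fin n)) (t : ℝ) : Prop :=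
  ∃ h : Fin n → ℝ, ∀ S ⊆ I, ∃ x ∈ K,
    (∀ i ∈ S, h i + t ≤ x i) ∧ (∀ i ∈ I \ S, x i ≤ h i)

/-!
Split `K ⊆ ℝ^n` along a coordinate `i` into the points from which one can move up by at least `t`
along the `i`-axis to another point of `K`, and the rest. Every line parallel to the `i`-axis meets
the rest in a set of diameter at most `t`, so the rest has volume at most `t` times that of the
slab of unit height over the projection of `K`. Doing this for all coordinates in turn bounds
`vol K` by a sum over the sets `I` of coordinates along which the first alternative was taken: the
points of the `I`-th set are thresholds witnessing that `K` shatters `I`, and its volume is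
weighted by `t ^ #Iᶜ`.

If `K ⊆ B`, a threshold is bounded on `I` by a point of `K`, coordinate by coordinate. Shrinking
these coordinates by `#I / n` leaves room in `B` for the other coordinates, which lie in `[0, 1]`;
since `(#I / n) ^ #I ≥ exp (-#Iᶜ)`, the `I`-th set has volume at most `exp #Iᶜ * vol B`. For `t` a
small multiple of `(k / n) * (vol K / vol B) ^ (1 / k)`, the sum over the `I` with `#Iᶜ > k` is
less than `vol K`, so some `I` with `#Iᶜ ≤ k` is shattered.
-/

open Set
open scoped Finset Pointwise

section Thresholds

variable {ι : Type*} [DecidableEq ι]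

/-- The points of `K` from which one can move up by at least `t` along the `i`-th axis to another
point of `K`: the base points of the chords of `K` that can separate two sides of a threshold. -/
def gapPoints (t : ℝ) (i : ι) (K : Set (ι → ℝ)) : Set (ι → ℝ) :=
  {x | x ∈ K ∧ ∃ r, t ≤ r ∧ x + Pi.single i r ∈ K}

/-- The slab `0 < x i < 1` over the projection of `K` along the `i`-th axis. It stands in for the
projection: it has the same volume but lies in the same space as `K`. -/
def unitSlab (i : ι) (K : Set (ι → ℝ)) : Set (ι → ℝ) :=
  {x | x i ∈ Ioo 0 1 ∧ ∃ r, x + Pi.single i r ∈ K}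

/-- The thresholds for the `t`-shattering of `I` by the section of `K` through the given
coordinates outside `I ∪ T`; the coordinates in `T` are placeholders ranging over `(0, 1)`. -/
def shatterThresholds (t : ℝ) (K : Set (ι → ℝ)) (I T : Finset ι) : Set (ι → ℝ) :=
  {h | (∀ i ∈ T, h i ∈ Ioo 0 1) ∧ ∀ S ⊆ I, ∃ x ∈ K,
    (∀ i ∈ S, h i + t ≤ x i) ∧ (∀ i ∈ I \ S, x i ≤ h i) ∧ ∀ i ∉ I, i ∉ T → x i = h i}

lemma isOpen_exists_add_single_mem {K : Set (ι → ℝ)} (hK : IsOpen K) (i : ι) (R : Set ℝ) :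
    IsOpen {x : ι → ℝ | ∃ r ∈ R, x + Pi.single i r ∈ K} := by
  have : {x : ι → ℝ | ∃ r ∈ R, x + Pi.single i r ∈ K} = ⋃ r ∈ R, (· + Pi.single i r) ⁻¹' K := by
    ext; simp
  rw [this]
  exact isOpen_biUnion fun r _ => hK.preimage (continuous_add_const _)

lemma isOpen_gapPoints {K : Set (ι → ℝ)} (hK : IsOpen K) (t : ℝ) (i : ι) :
    IsOpen (gapPoints t i K) :=
  hK.inter (isOpen_exists_add_single_mem hK i (Ici t))

lemma isOpen_unitSlab {K : Set (ι → ℝ)} (hK : IsOpen K) (i : ι) : IsOpen (unitSlab i K) := by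
  have := (isOpen_exists_add_single_mem hK i univ).inter
    (isOpen_Ioo.preimage (continuous_apply i) : IsOpen {x : ι → ℝ | x i ∈ Ioo 0 1})
  simpa [unitSlab, Set.inter_def, and_comm] using this

lemma volume_le_volume_gap_add (L : Set ℝ) (t : ℝ) :
    volume L ≤ volume {a ∈ L | ∃ r, t ≤ r ∧ a + r ∈ L} + ENNReal.ofReal t := by
  set H := {a ∈ L | ∃ r, t ≤ r ∧ a + r ∈ L}
  have lt_add : ∀ a ∈ L \ H, ∀ b ∈ L, b - a < t := by
    intro a ha b hb
    by_contra! hab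
    exact ha.2 ⟨ha.1, b - a, hab, by simpa using hb⟩
  have ediam_le : Metric.ediam (L \ H) ≤ ENNReal.ofReal t := Metric.ediam_le fun a ha b hb => by
    rw [edist_dist, Real.dist_eq]
    exact ENNReal.ofReal_le_ofReal
      (abs_sub_le_iff.2 ⟨(lt_add b hb a ha.1).le, (lt_add a ha b hb.1).le⟩)
  calc volume L ≤ volume (L ∩ H) + volume (L \ H) := measure_le_inter_add_sdiff ..
    _ ≤ volume H + ENNReal.ofReal t := by
        gcongr
        · exact Set.inter_subset_right
        · exact (Real.volume_le_diam _).trans ediam_le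

lemma update_add_single (x : ι → ℝ) (i : ι) (a r : ℝ) :
    Function.update x i a + Pi.single i r = Function.update x i (a + r) := by
  ext j
  obtain rfl | hj := eq_or_ne j i <;> simp [*]

lemma lintegral_indicator_update {s : Set (ι → ℝ)} (hs : MeasurableSet s) (x : ι → ℝ) (i : ι) :
    ∫⁻ a, s.indicator 1 (Function.update x i a) = volume {a | Function.update x i a ∈ s} :=
  lintegral_indicator_one (hs.preimage (measurable_update x))

lemma volume_le_add_mul_of_forall_line [Fintype ι] (i : ι) {A B C : Set (ι → ℝ)} (c : ENNReal)
    (hA : MeasurableSet A) (hB : MeasurableSet B) (hC : MeasurableSet C)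
    (h : ∀ x, volume {a | Function.update x i a ∈ A} ≤
      volume {a | Function.update x i a ∈ B} + c * volume {a | Function.update x i a ∈ C}) :
    volume A ≤ volume B + c * volume C := by
  have hB1 : Measurable (B.indicator (1 : (ι → ℝ) → ENNReal)) := measurable_one.indicator hB
  have hC1 : Measurable (C.indicator (1 : (ι → ℝ) → ENNReal)) := measurable_one.indicator hC
  rw [← lintegral_indicator_one hA, ← lintegral_indicator_one hB, ← lintegral_indicator_one hC,
    ← lintegral_const_mul c hC1, ← lintegral_add_left hB1]
  refine lintegral_le_of_lmarginal_le {i} (measurable_one.indicator hA)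
    (hB1.add (hC1.const_mul c)) fun x => ?_
  have hBx : Measurable fun a => B.indicator (1 : (ι → ℝ) → ENNReal) (Function.update x i a) :=
    hB1.comp (measurable_update x)
  have hCx : Measurable fun a => C.indicator (1 : (ι → ℝ) → ENNReal) (Function.update x i a) :=
    hC1.comp (measurable_update x)
  simpa only [lmarginal_singleton, lintegral_add_left hBx, lintegral_const_mul c hCx,
    lintegral_indicator_update hA, lintegral_indicator_update hB, lintegral_indicator_update hC]
    using h x

lemma volume_le_volume_gapPoints_add [Fintype ι] {K : Set (ι → ℝ)} (hK : IsOpen K) (t : ℝ)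
    (i : ι) :
    volume K ≤ volume (gapPoints t i K) + ENNReal.ofReal t * volume (unitSlab i K) := by
  refine volume_le_add_mul_of_forall_line i _ hK.measurableSet
    (isOpen_gapPoints hK t i).measurableSet (isOpen_unitSlab hK i).measurableSet fun x => ?_
  simp only [gapPoints, unitSlab, mem_ofPred_eq, update_add_single, Function.update_self]
  obtain hL | ⟨b, hb⟩ := {a | Function.update x i a ∈ K}.eq_empty_or_nonempty
  · simp [hL]
  · have slab_eq : {a : ℝ | a ∈ Ioo 0 1 ∧ ∃ r, Function.update x i (a + r) ∈ K} = Ioo 0 1 :=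
      sep_eq_self_iff_mem_true.2 fun a _ => ⟨b - a, by simpa using hb⟩
    rw [slab_eq, Real.volume_Ioo, sub_zero, ENNReal.ofReal_one, mul_one]
    exact volume_le_volume_gap_add _ t

variable {s t : ℝ} {K : Set (ι → ℝ)} {I T : Finset ι} {j : ι}

lemma shatterThresholds_gapPoints_subset (hI : j ∉ I) (hT : j ∉ T) :
    shatterThresholds t (gapPoints t j K) I T ⊆ shatterThresholds t K (insert j I) T := by
  rintro h ⟨hh, hshatter⟩
  refine ⟨hh, fun S hS => ?_⟩
  obtain ⟨x, ⟨hxK, r, htr, hrK⟩, hge, hle, heq⟩ :=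
    hshatter (S.erase j) (Finset.subset_insert_iff.1 hS)
  have hxj : x j = h j := heq j hI hT
  by_cases hjS : j ∈ S
  · refine ⟨_, hrK, ?_, ?_, ?_⟩ <;> simp only [Pi.add_apply, Pi.single_apply] <;> grind
  · exact ⟨x, hxK, by grind, by grind, by grind⟩

lemma shatterThresholds_unitSlab_subset (hI : j ∉ I) (hT : j ∉ T) :
    shatterThresholds t (unitSlab j K) I T ⊆ shatterThresholds t K I (insert j T) := by
  rintro h ⟨hh, hshatter⟩
  have hj : h j ∈ Ioo 0 1 := by
    obtain ⟨x, ⟨hxj, -⟩, -, -, heq⟩ := hshatter ∅ (Finset.empty_subset I)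
    exact heq j hI hT ▸ hxj
  refine ⟨(Finset.forall_mem_insert _ _ _).2 ⟨hj, hh⟩, fun S hS => ?_⟩
  obtain ⟨x, ⟨-, r, hrK⟩, hge, hle, heq⟩ := hshatter S hS
  refine ⟨_, hrK, ?_, ?_, ?_⟩ <;> simp only [Pi.add_apply, Pi.single_apply] <;> grind

lemma volume_le_sum_powerset_shatterThresholds [Fintype ι] (t : ℝ) (J : Finset ι)
    (hK : IsOpen K) :
    volume K ≤ ∑ I ∈ J.powerset,
      ENNReal.ofReal t ^ #(J \ I) * volume (shatterThresholds t K I (J \ I)) := by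
  induction J using Finset.induction_on generalizing K with
  | empty =>
    have hsub : K ⊆ shatterThresholds t K ∅ ∅ := fun x hx =>
      ⟨by simp, fun S hS => ⟨x, hx, by grind⟩⟩
    simpa using measure_mono hsub
  | insert j J hj ih =>
    rw [Finset.sum_powerset_insert hj, add_comm]
    refine (volume_le_volume_gapPoints_add hK t j).trans (add_le_add ?_ ?_)
    · refine (ih (isOpen_gapPoints hK t j)).trans (Finset.sum_le_sum fun I hI => ?_)
      have hjI : j ∉ I := fun h => hj (Finset.mem_powerset.1 hI h)
      rw [Finset.insert_sdiff_insert, Finset.sdiff_insert_of_notMem hj]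
      gcongr
      exact shatterThresholds_gapPoints_subset hjI fun h => hj (Finset.mem_sdiff.1 h).1
    · grw [ih (isOpen_unitSlab hK j), Finset.mul_sum]
      refine Finset.sum_le_sum fun I hI => ?_
      have hjI : j ∉ I := fun h => hj (Finset.mem_powerset.1 hI h)
      have hjJI : j ∉ J \ I := fun h => hj (Finset.mem_sdiff.1 h).1
      rw [Finset.insert_sdiff_of_notMem _ hjI, Finset.card_insert_of_notMem hjJI, pow_succ',
        mul_assoc]
      gcongr
      exact shatterThresholds_unitSlab_subset hjI hjJI

lemma shatterThresholds_add_pi_Ioo_subset [Fintype ι] (s t : ℝ) (K : Set (ι → ℝ)) (I : Finset ι) :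
    shatterThresholds t (K + univ.pi fun _ => Ioo 0 (t - s)) I Iᶜ ⊆ shatterThresholds s K I Iᶜ := by
  rintro h ⟨hh, hshatter⟩
  refine ⟨hh, fun S hS => ?_⟩
  obtain ⟨_, ⟨x, hx, v, hv, rfl⟩, hge, hle, -⟩ := hshatter S hS
  have hv' : ∀ i, 0 < v i ∧ v i < t - s := fun i => hv i (mem_univ i)
  refine ⟨x, hx, fun i hi => ?_, fun i hi => ?_,
    fun i hi hic => absurd (Finset.mem_compl.2 hi) hic⟩
  · have := hge i hi
    simp only [Pi.add_apply] at this
    linarith [hv' i]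
  · have := hle i hi
    simp only [Pi.add_apply] at this
    linarith [hv' i]

lemma volume_le_sum_shatterThresholds [Fintype ι] (hst : s < t) (K : Set (ι → ℝ)) :
    volume K ≤ ∑ I, ENNReal.ofReal t ^ #Iᶜ * volume (shatterThresholds s K I Iᶜ) := by
  -- The splitting needs measurable sets, so it is applied to the open set `K + Q`.
  set Q : Set (ι → ℝ) := univ.pi fun _ => Ioo 0 (t - s)
  have hQ : IsOpen Q := isOpen_set_pi finite_univ fun _ _ => isOpen_Ioo
  obtain ⟨v, hv⟩ : Q.Nonempty := univ_pi_nonempty_iff.2 fun _ => nonempty_Ioo.2 (sub_pos.2 hst)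
  calc volume K ≤ volume ((· + v) ⁻¹' (K + Q)) := measure_mono fun x hx => add_mem_add hx hv
    _ = volume (K + Q) := measure_preimage_add_right volume v _
    _ ≤ ∑ I, ENNReal.ofReal t ^ #Iᶜ * volume (shatterThresholds t (K + Q) I Iᶜ) := by
        simpa only [Finset.powerset_univ, ← Finset.compl_eq_univ_sdiff] using
          volume_le_sum_powerset_shatterThresholds t Finset.univ (hQ.add_left (s := K))
    _ ≤ ∑ I, ENNReal.ofReal t ^ #Iᶜ * volume (shatterThresholds s K I Iᶜ) := by
        gcongr with I
        exact shatterThresholds_add_pi_Ioo_subset s t K I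

lemma exists_abs_le_of_mem_shatterThresholds {s : ℝ} (hs : 0 ≤ s) {h : ι → ℝ}
    (hh : h ∈ shatterThresholds s K I T) : ∃ x ∈ K, ∀ i ∈ I, |h i| ≤ |x i| := by
  obtain ⟨x, hxK, hge, hle, -⟩ := hh.2 {i ∈ I | 0 ≤ h i} (Finset.filter_subset _ _)
  refine ⟨x, hxK, fun i hi => ?_⟩
  obtain h_nonneg | h_neg := le_or_gt 0 (h i)
  · exact abs_le_abs_of_nonneg h_nonneg (by linarith [hge i (by grind)])
  · exact abs_le_abs_of_nonpos h_neg.le (hle i (by grind))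

end Thresholds

lemma one_le_exp_sub_mul_div_pow {m n : ℕ} (hmn : m ≤ n) :
    1 ≤ Real.exp (n - m) * ((m : ℝ) / n) ^ m := by
  obtain rfl | hm := m.eq_zero_or_pos
  · simp
  have hm' : (0 : ℝ) < m := by exact_mod_cast hm
  have hn' : (0 : ℝ) < n := by exact_mod_cast hm.trans_le hmn
  have div_pow_le : ((n : ℝ) / m) ^ m ≤ Real.exp (n - m) := by
    convert Real.one_sub_div_pow_le_exp_neg (n := m) (t := m - n) (by linarith) using 1
    · congr 1
      field_simp
      ring
    · ring_nf
  calc (1 : ℝ) = ((n : ℝ) / m) ^ m * ((m : ℝ) / n) ^ m := by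
        rw [← mul_pow, div_mul_div_cancel₀ hm'.ne', div_self hn'.ne', one_pow]
    _ ≤ Real.exp (n - m) * ((m : ℝ) / n) ^ m := by gcongr

section AbsorbsCoordinateCubes

variable {ι : Type*} [Fintype ι] [DecidableEq ι] {B K : Set (ι → ℝ)}

/-- For every set `I` of coordinates, `B` contains the product of the `I`-projection of `B`, shrunk
by the factor `#I / n` (`n` being the dimension) and made solid, with the cube `[-1, 1]` in the
other coordinates. The volume estimate uses no other property of the balls `B_p^n`. -/
def AbsorbsCoordinateCubes (B : Set (ι → ℝ)) : Prop :=
  ∀ (I : Finset ι) (y z : ι → ℝ), z ∈ B →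
    (∀ i ∈ I, |y i| ≤ (#I : ℝ) / Fintype.card ι * |z i|) → (∀ i ∉ I, |y i| ≤ 1) → y ∈ B

lemma volume_shatterThresholds_le (hB : AbsorbsCoordinateCubes B) (hKB : K ⊆ B) {s : ℝ}
    (hs : 0 ≤ s) (I : Finset ι) :
    volume (shatterThresholds s K I Iᶜ) ≤ ENNReal.ofReal (Real.exp #Iᶜ) * volume B := by
  set q : ℝ := #I / Fintype.card ι
  set d : ι → ℝ := fun i => if i ∈ I then q else 1
  set f := Matrix.toLin' (Matrix.diagonal d) with hf
  have hq : 0 ≤ q := by positivity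
  have f_apply (h : ι → ℝ) (i : ι) : f h i = d i * h i := by
    rw [hf, Matrix.toLin'_apply, Matrix.mulVec_diagonal]
  have d_of_mem {i : ι} (hi : i ∈ I) : d i = q := if_pos hi
  have d_of_notMem {i : ι} (hi : i ∉ I) : d i = 1 := if_neg hi
  have image_subset : f '' shatterThresholds s K I Iᶜ ⊆ B := by
    rintro _ ⟨h, hh, rfl⟩
    obtain ⟨x, hxK, hx⟩ := exists_abs_le_of_mem_shatterThresholds hs hh
    refine hB I _ x (hKB hxK) (fun i hi => ?_) fun i hi => ?_
    · rw [f_apply, d_of_mem hi, abs_mul, abs_of_nonneg hq]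
      exact mul_le_mul_of_nonneg_left (hx i hi) hq
    · have hhi := hh.1 i (Finset.mem_compl.2 hi)
      rw [f_apply, d_of_notMem hi, one_mul, abs_of_pos hhi.1]
      exact hhi.2.le
  have det_eq : LinearMap.det f = q ^ #I := by
    rw [hf, LinearMap.det_toLin', Matrix.det_diagonal, Finset.prod_ite_mem_eq,
      Finset.prod_const]
  have one_le : 1 ≤ Real.exp #Iᶜ * |LinearMap.det f| := by
    rw [det_eq, abs_of_nonneg (pow_nonneg hq _), Finset.card_compl,
      Nat.cast_sub (Finset.card_le_univ I)]
    exact one_le_exp_sub_mul_div_pow (Finset.card_le_univ I)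
  calc volume (shatterThresholds s K I Iᶜ)
    _ ≤ ENNReal.ofReal (Real.exp #Iᶜ * |LinearMap.det f|) *
          volume (shatterThresholds s K I Iᶜ) :=
        le_mul_of_one_le_left' (ENNReal.one_le_ofReal.2 one_le)
    _ = ENNReal.ofReal (Real.exp #Iᶜ) * volume (f '' shatterThresholds s K I Iᶜ) := by
        rw [ENNReal.ofReal_mul (Real.exp_pos _).le, mul_assoc, Measure.addHaar_image_linearMap]
    _ ≤ ENNReal.ofReal (Real.exp #Iᶜ) * volume B := by gcongr

lemma sum_pow_card_compl_div_card_le (k : ℕ) :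
    ∑ I : Finset ι, ((k : ℝ) / Fintype.card ι) ^ #Iᶜ ≤ Real.exp k := by
  have sum_eq := Fintype.sum_pow_mul_eq_add_pow ι (1 : ℝ) (k / Fintype.card ι)
  simp only [one_pow, one_mul, ← Finset.card_compl] at sum_eq
  rw [sum_eq]
  have neg_le : -(k : ℝ) ≤ Fintype.card ι :=
    (neg_nonpos.2 k.cast_nonneg).trans (Fintype.card ι).cast_nonneg
  simpa [neg_div] using Real.one_sub_div_pow_le_exp_neg neg_le

lemma volume_le_of_shatterThresholds_eq_empty (hB : AbsorbsCoordinateCubes B) (hKB : K ⊆ B)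
    {k : ℕ} {s w : ℝ} (hs : 0 ≤ s) (hw0 : 0 ≤ w) (hw1 : w ≤ 1)
    (hsw : s < w * (k / Fintype.card ι) / Real.exp 1)
    (hempty : ∀ I : Finset ι, #Iᶜ ≤ k → shatterThresholds s K I Iᶜ = ∅) :
    volume K ≤ ENNReal.ofReal ((Real.exp 1 * w) ^ k) * volume B := by
  set a : ℝ := k / Fintype.card ι
  have : 0 ≤ a := by positivity
  have term_le (I : Finset ι) :
      ENNReal.ofReal (w * a / Real.exp 1) ^ #Iᶜ * volume (shatterThresholds s K I Iᶜ) ≤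
        ENNReal.ofReal (w ^ k * a ^ #Iᶜ) * volume B := by
    obtain hI | hI := le_or_gt #Iᶜ k
    · simp [hempty I hI]
    calc ENNReal.ofReal (w * a / Real.exp 1) ^ #Iᶜ * volume (shatterThresholds s K I Iᶜ)
      _ ≤ ENNReal.ofReal (w * a / Real.exp 1) ^ #Iᶜ *
            (ENNReal.ofReal (Real.exp #Iᶜ) * volume B) := by
          gcongr
          exact volume_shatterThresholds_le hB hKB hs I
      _ = ENNReal.ofReal ((w * a) ^ #Iᶜ) * volume B := by
          rw [← ENNReal.ofReal_pow (by positivity), ← mul_assoc,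
            ← ENNReal.ofReal_mul (by positivity), div_pow, ← Real.exp_nat_mul, mul_one,
            div_mul_cancel₀ _ (Real.exp_ne_zero _)]
      _ ≤ ENNReal.ofReal (w ^ k * a ^ #Iᶜ) * volume B := by
          have w_pow_le : w ^ #Iᶜ ≤ w ^ k := pow_le_pow_of_le_one hw0 hw1 hI.le
          rw [mul_pow]
          gcongr ENNReal.ofReal (?_ * _) * _
  calc volume K ≤ _ := volume_le_sum_shatterThresholds hsw K
    _ ≤ ∑ I : Finset ι, ENNReal.ofReal (w ^ k * a ^ #Iᶜ) * volume B :=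
        Finset.sum_le_sum fun I _ => term_le I
    _ = ENNReal.ofReal (w ^ k * ∑ I : Finset ι, a ^ #Iᶜ) * volume B := by
        rw [← Finset.sum_mul, Finset.mul_sum, ENNReal.ofReal_sum_of_nonneg]
        intro I _
        positivity
    _ ≤ ENNReal.ofReal (w ^ k * Real.exp k) * volume B := by
        gcongr
        exact sum_pow_card_compl_div_card_le k
    _ = ENNReal.ofReal ((Real.exp 1 * w) ^ k) * volume B := by
        rw [mul_pow, ← Real.exp_nat_mul, mul_one, mul_comm (w ^ k)]

lemma exists_shatterThresholds_nonempty [Nonempty ι] (hB : AbsorbsCoordinateCubes B)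
    (hKB : K ⊆ B) (hB0 : volume B ≠ 0) (hB_top : volume B ≠ ⊤) {k : ℕ} (hk : 0 < k) {u : ℝ}
    (hu : 0 < u) (huK : ENNReal.ofReal (u ^ k) * volume B ≤ volume K) :
    ∃ I : Finset ι, #Iᶜ ≤ k ∧
      (shatterThresholds (1 / 9 * ((k : ℝ) / Fintype.card ι) * u) K I Iᶜ).Nonempty := by
  by_contra! hempty
  have exp_one_sq_lt : Real.exp 1 * Real.exp 1 < 8 := by
    nlinarith [Real.exp_one_lt_d9, Real.exp_pos 1]
  have u_le_one : u ≤ 1 := by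
    have pow_mul_le : ENNReal.ofReal (u ^ k) * volume B ≤ 1 * volume B := by
      simpa using huK.trans (measure_mono hKB)
    rwa [ENNReal.mul_le_mul_iff_left hB0 hB_top, ENNReal.ofReal_le_one,
      pow_le_one_iff_of_nonneg hu.le hk.ne'] at pow_mul_le
  have a_pos : (0 : ℝ) < k / Fintype.card ι := by positivity
  set a : ℝ := k / Fintype.card ι
  set w : ℝ := Real.exp 1 * u / 8
  have threshold_lt : 1 / 9 * a * u < w * a / Real.exp 1 := by
    have : w * a / Real.exp 1 = 1 / 8 * a * u := by
      simp only [w]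
      field_simp
    rw [this]
    gcongr
    norm_num
  have w_le_one : w ≤ 1 := by
    have := Real.exp_one_lt_d9
    simp only [w]
    nlinarith
  have exp_mul_w_lt : Real.exp 1 * w < u := by
    simp only [w]
    nlinarith
  refine lt_irrefl (volume K) ?_
  calc volume K ≤ ENNReal.ofReal ((Real.exp 1 * w) ^ k) * volume B :=
        volume_le_of_shatterThresholds_eq_empty hB hKB (by positivity) (by positivity) w_le_one
          threshold_lt hempty
    _ < ENNReal.ofReal (u ^ k) * volume B := by
        rw [ENNReal.mul_lt_mul_iff_left hB0 hB_top, ENNReal.ofReal_lt_ofReal_iff (by positivity)]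
        exact pow_lt_pow_left₀ exp_mul_w_lt (by positivity) hk.ne'
    _ ≤ volume K := huK

end AbsorbsCoordinateCubes

lemma absorbsCoordinateCubes_cubeBall (n : ℕ) : AbsorbsCoordinateCubes (cubeBall n) := by
  intro I y z hz hyI hyIc i
  by_cases hi : i ∈ I
  · have hI : (#I : ℝ) / Fintype.card (Fin n) ≤ 1 :=
      div_le_one_of_le₀ (by exact_mod_cast Finset.card_le_univ I) (by positivity)
    exact (hyI i hi).trans (mul_le_one₀ hI (abs_nonneg _) (hz i))
  · exact hyIc i hi

lemma absorbsCoordinateCubes_lpBall {p : ℝ} (hp : 1 ≤ p) (n : ℕ) :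
    AbsorbsCoordinateCubes (lpBall p n) := by
  intro I y z hz hyI hyIc
  set q : ℝ := #I / Fintype.card (Fin n) with hq
  have hq0 : 0 ≤ q := by positivity
  have hq1 : q ≤ 1 :=
    div_le_one_of_le₀ (by exact_mod_cast Finset.card_le_univ I) (by positivity)
  have sum_mem_le : ∑ i ∈ I, |y i| ^ p ≤ q * n :=
    calc ∑ i ∈ I, |y i| ^ p ≤ ∑ i ∈ I, q * |z i| ^ p := by
          refine Finset.sum_le_sum fun i hi => ?_
          calc |y i| ^ p ≤ (q * |z i|) ^ p := by
                gcongr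
                exact hyI i hi
            _ = q ^ p * |z i| ^ p := Real.mul_rpow hq0 (abs_nonneg _)
            _ ≤ q * |z i| ^ p := by
                gcongr
                exact Real.rpow_le_self_of_le_one hq0 hq1 hp
      _ ≤ ∑ i, q * |z i| ^ p :=
          Finset.sum_le_univ_sum_of_nonneg fun i => by positivity
      _ ≤ q * n := by
          rw [← Finset.mul_sum]
          exact mul_le_mul_of_nonneg_left hz hq0
  have sum_compl_le : ∑ i ∈ Iᶜ, |y i| ^ p ≤ #Iᶜ := by
    simpa using Finset.sum_le_card_nsmul Iᶜ (fun i => |y i| ^ p) 1 fun i hi =>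
      Real.rpow_le_one (abs_nonneg _) (hyIc i (Finset.mem_compl.1 hi)) (by linarith)
  have q_mul : q * n = #I := by
    obtain rfl | hn := n.eq_zero_or_pos
    · simp [Subsingleton.elim I ∅]
    · rw [hq, Fintype.card_fin]
      field_simp
  calc ∑ i, |y i| ^ p = ∑ i ∈ I, |y i| ^ p + ∑ i ∈ Iᶜ, |y i| ^ p :=
        (Finset.sum_add_sum_compl I _).symm
    _ ≤ q * n + #Iᶜ := add_le_add sum_mem_le sum_compl_le
    _ = n := by
        rw [q_mul]
        exact_mod_cast (Finset.card_add_card_compl I).trans (Fintype.card_fin n)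

lemma volume_cubeBall_ne_top (n : ℕ) : volume (cubeBall n) ≠ ⊤ := by
  have : cubeBall n ⊆ Metric.closedBall 0 1 := fun x hx => by
    rw [mem_closedBall_zero_iff, pi_norm_le_iff_of_nonneg zero_le_one]
    exact hx
  exact ((measure_mono this).trans_lt measure_closedBall_lt_top).ne

lemma volume_lpBall_ne_top {p : ℝ} (hp : 1 ≤ p) (n : ℕ) : volume (lpBall p n) ≠ ⊤ := by
  have : lpBall p n ⊆ Metric.closedBall 0 n := fun x hx => by
    rw [mem_closedBall_zero_iff, pi_norm_le_iff_of_nonneg n.cast_nonneg]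
    intro i
    have pow_le : |x i| ^ p ≤ n :=
      (Finset.single_le_sum (f := fun j => |x j| ^ p) (fun j _ => by positivity)
        (Finset.mem_univ i)).trans hx
    obtain h_le | h_ge := le_total |x i| 1
    · exact h_le.trans (by exact_mod_cast i.pos)
    · exact (Real.self_le_rpow_of_one_le h_ge hp).trans pow_le
  exact ((measure_mono this).trans_lt measure_closedBall_lt_top).ne

lemma tShattered_of_shatterThresholds_nonempty {n : ℕ} {K : Set (Fin n → ℝ)} {s : ℝ}
    {I T : Finset (Fin n)} (h : (shatterThresholds s K I T).Nonempty) : TShattered K I s := by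
  obtain ⟨h, -, hshatter⟩ := h
  refine ⟨h, fun S hS => ?_⟩
  obtain ⟨x, hxK, hge, hle, -⟩ := hshatter S hS
  exact ⟨x, hxK, hge, hle⟩

lemma tShattered_zero {n : ℕ} {K : Set (Fin n → ℝ)} (hne : K.Nonempty) (I : Finset (Fin n)) :
    TShattered K I 0 := by
  obtain ⟨x, hx⟩ := hne
  exact ⟨x, fun S _ => ⟨x, hx, by simp, by simp⟩⟩

theorem comb_dim_from_volume_in_lp_ball_general {n k : ℕ} (hk : 0 < k) (hkn : k ≤ n)
    {B K : Set (Fin n → ℝ)} (hB : AbsorbsCoordinateCubes B) (hB_top : volume B ≠ ⊤)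
    (hne : K.Nonempty) (hKB : K ⊆ B) :
    ∃ I : Finset (Fin n), n - k ≤ #I ∧
      TShattered K I
        (1 / 9 * ((k : ℝ) / n) *
          ((volume K).toReal / (volume B).toReal) ^ ((1 : ℝ) / k)) := by
  have : Nonempty (Fin n) := ⟨⟨0, hk.trans_le hkn⟩⟩
  set r : ℝ := (volume K).toReal / (volume B).toReal with hr
  obtain hr0 | hr0 : 0 = r ∨ 0 < r := (by positivity : 0 ≤ r).eq_or_lt
  · refine ⟨Finset.univ, by simp, ?_⟩
    rw [← hr0, Real.zero_rpow (by positivity), mul_zero]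
    exact tShattered_zero hne _
  have B_ne_zero : volume B ≠ 0 := fun h => by simp [hr, h] at hr0
  have r_mul : ENNReal.ofReal ((r ^ ((1 : ℝ) / k)) ^ k) * volume B ≤ volume K := by
    have K_ne_top : volume K ≠ ⊤ := measure_ne_top_of_subset hKB hB_top
    rw [one_div, Real.rpow_inv_natCast_pow hr0.le hk.ne', hr, ← ENNReal.toReal_div,
      ENNReal.ofReal_toReal (ENNReal.div_ne_top K_ne_top B_ne_zero),
      ENNReal.div_mul_cancel B_ne_zero hB_top]
  obtain ⟨I, hI, hI_nonempty⟩ := exists_shatterThresholds_nonempty hB hKB B_ne_zero hB_top hk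
    (Real.rpow_pos_of_pos hr0 _) r_mul
  rw [Fintype.card_fin] at hI_nonempty
  have card_add := (Finset.card_add_card_compl I).trans (Fintype.card_fin n)
  exact ⟨I, by omega, tShattered_of_shatterThresholds_nonempty hI_nonempty⟩

/-- **Theorem 4.1.** There is an absolute constant `c > 0` such that for every
measurable `K ⊆ B_p^n` (`1 ≤ p ≤ ∞`) and every `0 < k ≤ n`, one has
`v(K, t) ≥ n − k` for `t = c (k/n) (vol K / vol B_p^n)^{1/k}`. -/
theorem comb_dim_from_volume_in_lp_ball :
    ∃ c : ℝ, 0 < c ∧ ∀ (n k : ℕ), 0 < k → k ≤ n →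
      (∀ (p : ℝ), 1 ≤ p → ∀ K : Set (Fin n → ℝ), K.Nonempty → MeasurableSet K →
        K ⊆ lpBall p n →
        ∃ I : Finset (Fin n), n - k ≤ I.card ∧
          TShattered K I
            (c * ((k : ℝ) / n) *
              ((volume K).toReal / (volume (lpBall p n)).toReal) ^ ((1 : ℝ) / k))) ∧
      (∀ K : Set (Fin n → ℝ), K.Nonempty → MeasurableSet K → K ⊆ cubeBall n →
        ∃ I : Finset (Fin n), n - k ≤ I.card ∧
          TShattered K I
            (c * ((k : ℝ) / n) *
              ((volume K).toReal / (volume (cubeBall n)).toReal) ^ ((1 : ℝ) / k))) :=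
  ⟨1 / 9, by norm_num, fun n _ hk hkn =>
    ⟨fun _ hp _ hne _ hKB => comb_dim_from_volume_in_lp_ball_general hk hkn
        (absorbsCoordinateCubes_lpBall hp n) (volume_lpBall_ne_top hp n) hne hKB,
      fun _ hne _ hKB => comb_dim_from_volume_in_lp_ball_general hk hkn
        (absorbsCoordinateCubes_cubeBall n) (volume_cubeBall_ne_top n) hne hKB⟩⟩
end
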